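/- Assume (H1)–(H4). If ∫_{t₀}^∞ r₁(v)^{-1/α} ( ∫_{t₀}^v r₂(u)^{-1/β} ( ∫_{t₀}^u π(σ(s))^γ·q(s) ds )^{1/β} du )^{1/α} dv = ∞, then equation (E) has property A, i.e. every solution of (E) is either oscillatory or tends to 0 as t → ∞. -/

import Mathlib

open Filter MeasureTheory Set

/-- Signed power: for exponents that are quotients of odd positive integers,
`x ^ p` preserves the sign of `x`. -/
noncomputable def opow (x p : ℝ) : ℝ := Real.sign x * |x| ^ p

/-- `L₁y = r₁ · (y')^α`. -/
noncomputable def L1 (r₁ : ℝ → ℝ) (α : ℝ) (y : ℝ → ℝ) : ℝ → ℝ :=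
  fun t => r₁ t * opow (deriv y t) α

/-- `L₂y = r₂ · ((L₁y)')^β`. -/
noncomputable def L2 (r₁ r₂ : ℝ → ℝ) (α β : ℝ) (y : ℝ → ℝ) : ℝ → ℝ :=
  fun t => r₂ t * opow (deriv (L1 r₁ α y) t) β

/-- `L₃y = (L₂y)'`. -/
noncomputable def L3 (r₁ r₂ : ℝ → ℝ) (α β : ℝ) (y : ℝ → ℝ) : ℝ → ℝ :=
  deriv (L2 r₁ r₂ α β y)

/-- A real number which is a quotient of odd positive integers. -/
def OddQuotient (x : ℝ) : Prop :=
  ∃ m n : ℕ, Odd m ∧ Odd n ∧ 0 < m ∧ 0 < n ∧ x = (m : ℝ) / (n : ℝ)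

/-- The standing hypotheses (H1)–(H4). -/
structure Hyp (t₀ α β γ : ℝ) (r₁ r₂ q σ : ℝ → ℝ) : Prop where
  ht₀ : 0 < t₀
  hα : OddQuotient α
  hβ : OddQuotient β
  hγ : OddQuotient γ
  hr₁c : ContinuousOn r₁ (Set.Ici t₀)
  hr₂c : ContinuousOn r₂ (Set.Ici t₀)
  hr₁p : ∀ t, t₀ ≤ t → 0 < r₁ t
  hr₂p : ∀ t, t₀ ≤ t → 0 < r₂ t
  /-- noncanonical: `π₁(t₀) = ∫_{t₀}^∞ r₁^{-1/α} < ∞` -/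
  hπ₁fin : IntegrableOn (fun s => r₁ s ^ (-(1/α))) (Set.Ici t₀)
  /-- noncanonical: `π₂(t₀) = ∫_{t₀}^∞ r₂^{-1/β} < ∞` -/
  hπ₂fin : IntegrableOn (fun s => r₂ s ^ (-(1/β))) (Set.Ici t₀)
  hqc : ContinuousOn q (Set.Ici t₀)
  hq0 : ∀ t, t₀ ≤ t → 0 ≤ q t
  /-- `q` does not vanish eventually -/
  hqnv : ∀ T, t₀ ≤ T → ∃ t, T ≤ t ∧ q t ≠ 0
  hσd : DifferentiableOn ℝ σ (Set.Ici t₀)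
  hσd' : ContinuousOn (deriv σ) (Set.Ici t₀)
  hσpos : ∀ t, t₀ ≤ t → 0 < σ t
  hσadv : ∀ t, t₀ ≤ t → t ≤ σ t
  hσmono : ∀ t, t₀ ≤ t → 0 ≤ deriv σ t

/-- `y` is a (nontrivial) solution of equation (E) on some half-line `[T,∞) ⊆ [t₀,∞)`. -/
def IsSolution (t₀ α β γ : ℝ) (r₁ r₂ q σ y : ℝ → ℝ) : Prop :=
  ∃ T, t₀ ≤ T ∧
    ContinuousOn y (Set.Ici T) ∧
    DifferentiableOn ℝ y (Set.Ici T) ∧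
    ContinuousOn (L1 r₁ α y) (Set.Ici T) ∧
    DifferentiableOn ℝ (L1 r₁ α y) (Set.Ici T) ∧
    ContinuousOn (L2 r₁ r₂ α β y) (Set.Ici T) ∧
    DifferentiableOn ℝ (L2 r₁ r₂ α β y) (Set.Ici T) ∧
    (∀ t, T ≤ t → L3 r₁ r₂ α β y t + q t * opow (y (σ t)) γ = 0) ∧
    (∀ T', T ≤ T' → ∃ t, T' ≤ t ∧ y t ≠ 0)

/-- A function is oscillatory if it has arbitrarily large zeros. -/
def Oscillatory (y : ℝ → ℝ) : Prop := ∀ T : ℝ, ∃ t, T ≤ t ∧ y t = 0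

/-- Equation (E) has property A: every solution is oscillatory or tends to `0`. -/
def PropertyA (t₀ α β γ : ℝ) (r₁ r₂ q σ : ℝ → ℝ) : Prop :=
  ∀ y : ℝ → ℝ, IsSolution t₀ α β γ r₁ r₂ q σ y →
    Oscillatory y ∨ Filter.Tendsto y Filter.atTop (nhds 0)

/-- Equation (E) is oscillatory: every solution is oscillatory. -/
def OscillatoryEq (t₀ α β γ : ℝ) (r₁ r₂ q σ : ℝ → ℝ) : Prop :=
  ∀ y : ℝ → ℝ, IsSolution t₀ α β γ r₁ r₂ q σ y → Oscillatory y

/-- `π₁(t) = ∫_t^∞ r₁(s)^{-1/α} ds`. -/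
noncomputable def pi1 (r₁ : ℝ → ℝ) (α : ℝ) (t : ℝ) : ℝ :=
  ∫ s in Set.Ioi t, r₁ s ^ (-(1/α))

/-- `π₂(t) = ∫_t^∞ r₂(s)^{-1/β} ds`. -/
noncomputable def pi2 (r₂ : ℝ → ℝ) (β : ℝ) (t : ℝ) : ℝ :=
  ∫ s in Set.Ioi t, r₂ s ^ (-(1/β))

/-- `π(t) = ∫_t^∞ r₁(s)^{-1/α} · π₂(s)^{1/α} ds`. -/
noncomputable def piInf (r₁ r₂ : ℝ → ℝ) (α β : ℝ) (t : ℝ) : ℝ :=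
  ∫ s in Set.Ioi t, r₁ s ^ (-(1/α)) * (pi2 r₂ β s) ^ (1/α)

/-- The class `S₁`: `y > 0, L₁y < 0, L₂y < 0, L₃y < 0` on `[t₁,∞)`. -/
def InS1 (r₁ r₂ : ℝ → ℝ) (α β : ℝ) (y : ℝ → ℝ) (t₁ : ℝ) : Prop :=
  ∀ t, t₁ ≤ t → 0 < y t ∧ L1 r₁ α y t < 0 ∧ L2 r₁ r₂ α β y t < 0 ∧ L3 r₁ r₂ α β y t < 0

/-- The class `S₂`: `y > 0, L₁y < 0, L₂y > 0, L₃y < 0` on `[t₁,∞)`. -/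
def InS2 (r₁ r₂ : ℝ → ℝ) (α β : ℝ) (y : ℝ → ℝ) (t₁ : ℝ) : Prop :=
  ∀ t, t₁ ≤ t → 0 < y t ∧ L1 r₁ α y t < 0 ∧ 0 < L2 r₁ r₂ α β y t ∧ L3 r₁ r₂ α β y t < 0

/-- The class `S₃`: `y > 0, L₁y > 0, L₂y > 0, L₃y < 0` on `[t₁,∞)`. -/
def InS3 (r₁ r₂ : ℝ → ℝ) (α β : ℝ) (y : ℝ → ℝ) (t₁ : ℝ) : Prop :=
  ∀ t, t₁ ≤ t → 0 < y t ∧ 0 < L1 r₁ α y t ∧ 0 < L2 r₁ r₂ α β y t ∧ L3 r₁ r₂ α β y t < 0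

/-- The class `S₄`: `y > 0, L₁y > 0, L₂y < 0, L₃y < 0` on `[t₁,∞)`. -/
def InS4 (r₁ r₂ : ℝ → ℝ) (α β : ℝ) (y : ℝ → ℝ) (t₁ : ℝ) : Prop :=
  ∀ t, t₁ ≤ t → 0 < y t ∧ 0 < L1 r₁ α y t ∧ L2 r₁ r₂ α β y t < 0 ∧ L3 r₁ r₂ α β y t < 0


lemma aux_anti {f : ℝ → ℝ} {a : ℝ} (hd : ∀ t, a ≤ t → DifferentiableAt ℝ f t)
    (h : ∀ t, a ≤ t → deriv f t ≤ 0) : AntitoneOn f (Set.Ici a) := by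
  refine antitoneOn_of_deriv_nonpos (convex_Ici a)
    (fun t ht => (hd t ht).continuousAt.continuousWithinAt)
    (fun t ht => (hd t (interior_subset ht)).differentiableWithinAt)
    (fun t ht => h t (interior_subset ht))

lemma aux_mono {f : ℝ → ℝ} {a : ℝ} (hd : ∀ t, a ≤ t → DifferentiableAt ℝ f t)
    (h : ∀ t, a ≤ t → 0 ≤ deriv f t) : MonotoneOn f (Set.Ici a) := by
  refine monotoneOn_of_deriv_nonneg (convex_Ici a)
    (fun t ht => (hd t ht).continuousAt.continuousWithinAt)
    (fun t ht => (hd t (interior_subset ht)).differentiableWithinAt)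
    (fun t ht => h t (interior_subset ht))

lemma aux_sign {f : ℝ → ℝ} {a : ℝ}
    (h : MonotoneOn f (Set.Ici a) ∨ AntitoneOn f (Set.Ici a)) :
    ∃ b, a ≤ b ∧ ((∀ t, b ≤ t → 0 ≤ f t) ∨ (∀ t, b ≤ t → f t ≤ 0)) := by
  rcases h with h | h
  · by_cases hx : ∃ b, a ≤ b ∧ 0 ≤ f b
    · obtain ⟨b, hb, h0⟩ := hx
      exact ⟨b, hb, Or.inl fun t ht => h0.trans (h hb (hb.trans ht) ht)⟩
    · push Not at hx
      exact ⟨a, le_rfl, Or.inr fun t ht => (hx t ht).le⟩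
  · by_cases hx : ∃ b, a ≤ b ∧ f b ≤ 0
    · obtain ⟨b, hb, h0⟩ := hx
      exact ⟨b, hb, Or.inr fun t ht => (h hb (hb.trans ht) ht).trans h0⟩
    · push Not at hx
      exact ⟨a, le_rfl, Or.inl fun t ht => (hx t ht).le⟩

/-- Comparison: `F' ≤ -c G'`, `G → ∞` gives `F ≤ -(c/2) G` eventually. -/
lemma aux_cmp {F G : ℝ → ℝ} {a c : ℝ} (hc : 0 < c)
    (hF : ∀ t, a ≤ t → DifferentiableAt ℝ F t)
    (hG : ∀ t, a ≤ t → DifferentiableAt ℝ G t)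
    (h : ∀ t, a ≤ t → deriv F t ≤ -(c * deriv G t))
    (hlim : Tendsto G atTop atTop) :
    ∃ b, a ≤ b ∧ ∀ t, b ≤ t → F t ≤ -((c/2) * G t) := by
  have hanti : AntitoneOn (fun t => F t + c * G t) (Set.Ici a) := by
    refine aux_anti (fun t ht => (hF t ht).add ((hG t ht).const_mul c)) (fun t ht => ?_)
    have := ((hF t ht).hasDerivAt.add ((hG t ht).hasDerivAt.const_mul c)).deriv
    have h2 := h t ht
    have e : deriv (fun t => F t + c * G t) t = deriv F t + c * deriv G t := this
    rw [e]; linarith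
  obtain ⟨b, hb⟩ := (tendsto_atTop.1 hlim ((F a + c * G a) / (c/2))).exists_forall_of_atTop
  refine ⟨max a b, le_max_left _ _, fun t ht => ?_⟩
  have h1 := hanti (Set.mem_Ici.2 le_rfl) (Set.mem_Ici.2 ((le_max_left a b).trans ht))
    ((le_max_left a b).trans ht)
  have h2 := hb t ((le_max_right a b).trans ht)
  rw [div_le_iff₀ (by positivity)] at h2
  simp only at h1
  linarith

lemma opow_neg' (x p : ℝ) : opow (-x) p = - opow x p := by
  simp [opow, Real.sign_neg]

lemma opow_pos_eq {x p : ℝ} (hx : 0 < x) : opow x p = x ^ p := by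
  simp [opow, Real.sign_of_pos hx, abs_of_pos hx]

lemma opow_neg_eq {x p : ℝ} (hx : x < 0) : opow x p = -(-x) ^ p := by
  simp [opow, Real.sign_of_neg hx, abs_of_neg hx]

lemma nonneg_of_opow {r d p : ℝ} (hr : 0 < r) (h : 0 ≤ r * opow d p) : 0 ≤ d := by
  by_contra hd
  push Not at hd
  rw [opow_neg_eq hd] at h
  have := mul_pos hr (Real.rpow_pos_of_pos (neg_pos.2 hd) p)
  linarith

lemma nonpos_of_opow {r d p : ℝ} (hr : 0 < r) (h : r * opow d p ≤ 0) : d ≤ 0 := by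
  by_contra hd
  push Not at hd
  rw [opow_pos_eq hd] at h
  have := mul_pos hr (Real.rpow_pos_of_pos hd p)
  linarith

lemma opow_bound {r d p k c : ℝ} (hr : 0 < r) (hp : 0 < p) (hk : 0 ≤ k) (hc : 0 < c)
    (h : r * opow d p ≤ -(c * k)) :
    d ≤ -(c ^ (1/p) * (r ^ (-(1/p)) * k ^ (1/p))) := by
  have hd : d ≤ 0 := nonpos_of_opow hr (h.trans (by have := mul_nonneg hc.le hk; linarith))
  have h1 : c * k ≤ r * (-d) ^ p := by
    rcases hd.lt_or_eq with hd | hd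
    · rw [opow_neg_eq hd] at h; linarith
    · subst hd
      simp [opow] at h
      simpa [Real.zero_rpow hp.ne'] using h
  have h2 : c * k * r⁻¹ ≤ (-d) ^ p := by
    rw [← div_eq_mul_inv, div_le_iff₀ hr]; linarith
  have h3 := Real.rpow_le_rpow (by positivity) h2 (by positivity : 0 ≤ 1/p)
  rw [← Real.rpow_mul (by linarith), mul_one_div_cancel hp.ne', Real.rpow_one,
    Real.mul_rpow (by positivity) (by positivity), Real.mul_rpow (by positivity) (by positivity),
    Real.inv_rpow hr.le, ← Real.rpow_neg hr.le] at h3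
  linarith

/-- primitive: properties of `∫ t₀..t` of a nonnegative continuous function. -/
lemma aux_prim {f : ℝ → ℝ} {a : ℝ} (hf : ContinuousOn f (Set.Ici a))
    (h0 : ∀ t, a ≤ t → 0 ≤ f t) :
    ContinuousOn (fun t => ∫ s in a..t, f s) (Set.Ici a) ∧
    (∀ t, a ≤ t → 0 ≤ ∫ s in a..t, f s) ∧
    (∀ t, a < t → HasDerivAt (fun t => ∫ s in a..t, f s) (f t) t) ∧
    MonotoneOn (fun t => ∫ s in a..t, f s) (Set.Ici a) := by
  have hint : ∀ s t, a ≤ s → a ≤ t → IntervalIntegrable f volume s t := fun s t hs ht =>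
    (hf.mono (fun x hx => (le_min hs ht).trans hx.1)).intervalIntegrable
  have hder : ∀ t, a < t → HasDerivAt (fun t => ∫ s in a..t, f s) (f t) t := by
    intro t ht
    refine intervalIntegral.integral_hasDerivAt_right (hint a t le_rfl ht.le) ?_
      (hf.continuousAt (Ici_mem_nhds ht))
    exact (hf.mono Ioi_subset_Ici_self).stronglyMeasurableAtFilter isOpen_Ioi t ht
  refine ⟨?_, ?_, hder, ?_⟩
  · intro t ht
    have : ContinuousOn (fun t => ∫ s in a..t, f s) (Set.uIcc a (t+1)) :=
      intervalIntegral.continuousOn_primitive_interval'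
        (hint a (t+1) le_rfl (by have : a ≤ t := ht; linarith)) (by simp)
    have ht' : a ≤ t := ht
    rw [uIcc_of_le (by linarith)] at this
    have h2 := this t ⟨ht', by linarith⟩
    refine h2.mono_of_mem_nhdsWithin ?_
    rw [← Set.Ici_inter_Iic]
    exact Filter.inter_mem self_mem_nhdsWithin
      (mem_nhdsWithin_of_mem_nhds (Iic_mem_nhds (by linarith)))
  · intro t ht
    exact intervalIntegral.integral_nonneg ht (fun u hu => h0 u hu.1)
  · intro s hs t ht hst
    have := intervalIntegral.integral_add_adjacent_intervals (hint a s le_rfl hs) (hint s t hs ht)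
    have h2 : 0 ≤ ∫ u in s..t, f u :=
      intervalIntegral.integral_nonneg hst (fun u hu => h0 u (le_trans hs hu.1))
    simp only
    linarith

/-- if `∫ w · J^p → ∞` with `w` integrable and `J` monotone then `J → ∞`. -/
lemma aux_inf {w J : ℝ → ℝ} {a p : ℝ} (hp : 0 < p)
    (hw : ContinuousOn w (Set.Ici a)) (hw0 : ∀ t, a ≤ t → 0 ≤ w t)
    (hwi : IntegrableOn w (Set.Ici a))
    (hJ : ContinuousOn J (Set.Ici a)) (hJ0 : ∀ t, a ≤ t → 0 ≤ J t)
    (hJm : MonotoneOn J (Set.Ici a))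
    (hlim : Tendsto (fun t => ∫ s in a..t, w s * J s ^ p) atTop atTop) :
    Tendsto J atTop atTop := by
  by_cases hb : ∃ M, ∀ t, a ≤ t → J t ≤ M
  · exfalso
    obtain ⟨M, hM⟩ := hb
    have hM0 : 0 ≤ M := (hJ0 a le_rfl).trans (hM a le_rfl)
    obtain ⟨t, ht1, ht2⟩ := ((tendsto_atTop.1 hlim (M ^ p * (∫ s in Set.Ici a, w s) + 1)).and
      (eventually_ge_atTop a)).exists
    have e1 : ∫ s in a..t, w s * J s ^ p ≤ ∫ s in a..t, M ^ p * w s := by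
      have hsub : Set.uIcc a t ⊆ Set.Ici a := by
        rw [uIcc_of_le ht2]; exact fun x hx => hx.1
      refine intervalIntegral.integral_mono_on ht2 ?_ ?_ ?_
      · exact ((hw.mul (hJ.rpow_const (fun x _ => Or.inr hp.le))).mono hsub).intervalIntegrable
      · exact ((continuousOn_const.mul hw).mono hsub).intervalIntegrable
      · intro x hx
        rw [mul_comm]
        exact mul_le_mul_of_nonneg_right (Real.rpow_le_rpow (hJ0 x hx.1) (hM x hx.1) hp.le)
          (hw0 x hx.1)
    rw [intervalIntegral.integral_const_mul, intervalIntegral.integral_of_le (f := w) ht2] at e1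
    have e2 : ∫ s in Set.Ioc a t, w s ≤ ∫ s in Set.Ici a, w s := by
      refine setIntegral_mono_set hwi ?_ ?_
      · exact (ae_restrict_iff' measurableSet_Ici).2 (ae_of_all _ fun x hx => hw0 x hx)
      · exact (Ioc_subset_Ioi_self.trans Ioi_subset_Ici_self).eventuallyLE
    have e3 := mul_le_mul_of_nonneg_left e2 (Real.rpow_nonneg hM0 p)
    linarith
  · push Not at hb
    refine tendsto_atTop.2 fun M => ?_
    obtain ⟨t, ht, hM⟩ := hb M
    filter_upwards [eventually_ge_atTop t] with s hs
    exact hM.le.trans (hJm ht (le_trans ht hs) hs)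

/-- tail integrals -/
lemma aux_tail {f : ℝ → ℝ} {a : ℝ} (hf : ContinuousOn f (Set.Ici a))
    (h0 : ∀ t, a ≤ t → 0 ≤ f t) (hfi : IntegrableOn f (Set.Ici a)) :
    ContinuousOn (fun t => ∫ s in Set.Ioi t, f s) (Set.Ici a) ∧
    (∀ t, a ≤ t → 0 ≤ ∫ s in Set.Ioi t, f s) ∧
    (∀ t, a ≤ t → (∫ s in Set.Ioi t, f s) ≤ ∫ s in Set.Ioi a, f s) := by
  have key : ∀ t, a ≤ t →
      ∫ s in Set.Ioi t, f s = (∫ s in Set.Ioi a, f s) - ∫ s in a..t, f s := by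
    intro t ht
    have := intervalIntegral.integral_interval_add_Ioi (a := a) (b := t) (f := f)
      (μ := volume) (hfi.mono_set Ioi_subset_Ici_self)
      (hfi.mono_set (fun x hx => le_trans ht (le_of_lt hx)))
    linarith
  obtain ⟨p1, p2, -, -⟩ := aux_prim hf h0
  refine ⟨(continuousOn_const.sub p1).congr key, ?_, ?_⟩
  · intro t ht
    exact setIntegral_nonneg measurableSet_Ioi (fun x hx => h0 x (le_trans ht (le_of_lt hx)))
  · intro t ht
    rw [key t ht]
    have := p2 t ht
    linarith

lemma OddQuotient.pos' {x : ℝ} (h : OddQuotient x) : 0 < x := by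
  obtain ⟨m, n, -, -, hm, hn, rfl⟩ := h
  positivity

lemma core_pos (t₀ α β γ : ℝ) (r₁ r₂ q σ : ℝ → ℝ)
    (H : Hyp t₀ α β γ r₁ r₂ q σ)
    (hdiv : Filter.Tendsto (fun t => ∫ v in t₀..t, r₁ v ^ (-(1/α)) *
      (∫ u in t₀..v, r₂ u ^ (-(1/β)) *
        (∫ s in t₀..u, (piInf r₁ r₂ α β (σ s)) ^ γ * q s) ^ (1/β)) ^ (1/α))
      Filter.atTop Filter.atTop) (y : ℝ → ℝ) (T : ℝ) (hT : t₀ < T)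
    (hy : ∀ t, T ≤ t → DifferentiableAt ℝ y t)
    (hL1 : ∀ t, T ≤ t → DifferentiableAt ℝ (L1 r₁ α y) t)
    (hL2 : ∀ t, T ≤ t → DifferentiableAt ℝ (L2 r₁ r₂ α β y) t)
    (heq : ∀ t, T ≤ t → L3 r₁ r₂ α β y t + q t * opow (y (σ t)) γ = 0)
    (hpos : ∀ t, T ≤ t → 0 < y t) : Tendsto y atTop (nhds 0) := by
  have hα := H.hα.pos'
  have hβ := H.hβ.pos'
  have hγ := H.hγ.pos'
  have hα' : 0 < 1/α := by positivity
  have hβ' : 0 < 1/β := by positivity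
  -- weights
  have w1c : ContinuousOn (fun s => r₁ s ^ (-(1/α))) (Set.Ici t₀) :=
    H.hr₁c.rpow_const (fun x hx => Or.inl (H.hr₁p x hx).ne')
  have w2c : ContinuousOn (fun s => r₂ s ^ (-(1/β))) (Set.Ici t₀) :=
    H.hr₂c.rpow_const (fun x hx => Or.inl (H.hr₂p x hx).ne')
  have w10 : ∀ t, t₀ ≤ t → 0 ≤ r₁ t ^ (-(1/α)) := fun t ht => Real.rpow_nonneg (H.hr₁p t ht).le _
  have w20 : ∀ t, t₀ ≤ t → 0 ≤ r₂ t ^ (-(1/β)) := fun t ht => Real.rpow_nonneg (H.hr₂p t ht).le _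
  -- π₂, π
  obtain ⟨p2c, p20, p2b⟩ := aux_tail w2c w20 H.hπ₂fin
  have fc : ContinuousOn (fun s => r₁ s ^ (-(1/α)) * (pi2 r₂ β s) ^ (1/α)) (Set.Ici t₀) :=
    w1c.mul (p2c.rpow_const (fun x _ => Or.inr hα'.le))
  have f0 : ∀ t, t₀ ≤ t → 0 ≤ r₁ t ^ (-(1/α)) * (pi2 r₂ β t) ^ (1/α) := fun t ht =>
    mul_nonneg (w10 t ht) (Real.rpow_nonneg (p20 t ht) _)
  have fi : IntegrableOn (fun s => r₁ s ^ (-(1/α)) * (pi2 r₂ β s) ^ (1/α)) (Set.Ici t₀) := by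
    refine Integrable.mono' (H.hπ₁fin.mul_const ((pi2 r₂ β t₀) ^ (1/α)))
      (fc.aestronglyMeasurable measurableSet_Ici) ?_
    refine (ae_restrict_iff' measurableSet_Ici).2 (ae_of_all _ fun x hx => ?_)
    rw [Real.norm_of_nonneg (f0 x hx)]
    exact mul_le_mul_of_nonneg_left (Real.rpow_le_rpow (p20 x hx) (p2b x hx) hα'.le) (w10 x hx)
  obtain ⟨pc, pn, pb⟩ := aux_tail fc f0 fi
  have hσm : ∀ t, t₀ ≤ t → t₀ ≤ σ t := fun t ht => ht.trans (H.hσadv t ht)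
  have gc : ContinuousOn (fun s => (piInf r₁ r₂ α β (σ s)) ^ γ * q s) (Set.Ici t₀) := by
    refine ContinuousOn.mul (ContinuousOn.rpow_const ?_ (fun x _ => Or.inr hγ.le)) H.hqc
    exact pc.comp H.hσd.continuousOn (fun t ht => hσm t ht)
  have g0 : ∀ t, t₀ ≤ t → 0 ≤ (piInf r₁ r₂ α β (σ t)) ^ γ * q t := fun t ht =>
    mul_nonneg (Real.rpow_nonneg (pn _ (hσm t ht)) _) (H.hq0 t ht)
  obtain ⟨Ic, I0, Id, Im⟩ := aux_prim gc g0
  set I : ℝ → ℝ := fun u => ∫ s in t₀..u, (piInf r₁ r₂ α β (σ s)) ^ γ * q s with hI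
  have jc : ContinuousOn (fun u => r₂ u ^ (-(1/β)) * I u ^ (1/β)) (Set.Ici t₀) :=
    w2c.mul (Ic.rpow_const (fun x _ => Or.inr hβ'.le))
  have j0 : ∀ t, t₀ ≤ t → 0 ≤ r₂ t ^ (-(1/β)) * I t ^ (1/β) := fun t ht =>
    mul_nonneg (w20 t ht) (Real.rpow_nonneg (I0 t ht) _)
  obtain ⟨Jc, J0, Jd, Jm⟩ := aux_prim jc j0
  set J : ℝ → ℝ := fun v => ∫ u in t₀..v, r₂ u ^ (-(1/β)) * I u ^ (1/β) with hJ
  have kc : ContinuousOn (fun u => r₁ u ^ (-(1/α)) * J u ^ (1/α)) (Set.Ici t₀) :=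
    w1c.mul (Jc.rpow_const (fun x _ => Or.inr hα'.le))
  have k0 : ∀ t, t₀ ≤ t → 0 ≤ r₁ t ^ (-(1/α)) * J t ^ (1/α) := fun t ht =>
    mul_nonneg (w10 t ht) (Real.rpow_nonneg (J0 t ht) _)
  obtain ⟨Kc, K0, Kd, Km⟩ := aux_prim kc k0
  set K : ℝ → ℝ := fun v => ∫ u in t₀..v, r₁ u ^ (-(1/α)) * J u ^ (1/α) with hK
  have Kinf : Tendsto K atTop atTop := hdiv
  have Jinf : Tendsto J atTop atTop := aux_inf hα' w1c w10 H.hπ₁fin Jc J0 Jm Kinf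
  have Iinf : Tendsto I atTop atTop := aux_inf hβ' w2c w20 H.hπ₂fin Ic I0 Im Jinf
  -- sign analysis
  have hd3 : ∀ t, T ≤ t → deriv (L2 r₁ r₂ α β y) t = -(q t * (y (σ t)) ^ γ) := by
    intro t ht
    have h1 := heq t ht
    rw [opow_pos_eq (hpos _ (ht.trans (H.hσadv t (hT.le.trans ht))))] at h1
    unfold L3 at h1
    linarith
  have aL2 : AntitoneOn (L2 r₁ r₂ α β y) (Set.Ici T) := by
    refine aux_anti hL2 (fun t ht => ?_)
    rw [hd3 t ht]
    have := mul_nonneg (H.hq0 t (hT.le.trans ht))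
      (Real.rpow_nonneg (hpos _ (ht.trans (H.hσadv t (hT.le.trans ht)))).le γ)
    linarith
  obtain ⟨b, hb, hs2⟩ := aux_sign (Or.inr aL2)
  have mL1 : MonotoneOn (L1 r₁ α y) (Set.Ici b) ∨ AntitoneOn (L1 r₁ α y) (Set.Ici b) := by
    rcases hs2 with hs | hs
    · exact Or.inl (aux_mono (fun t ht => hL1 t (hb.trans ht)) (fun t ht =>
        nonneg_of_opow (H.hr₂p t (hT.le.trans (hb.trans ht))) (hs t ht)))
    · exact Or.inr (aux_anti (fun t ht => hL1 t (hb.trans ht)) (fun t ht =>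
        nonpos_of_opow (H.hr₂p t (hT.le.trans (hb.trans ht))) (hs t ht)))
  obtain ⟨c, hc, hs1⟩ := aux_sign mL1
  have hTc := hb.trans hc
  have my : MonotoneOn y (Set.Ici c) ∨ AntitoneOn y (Set.Ici c) := by
    rcases hs1 with hs | hs
    · exact Or.inl (aux_mono (fun t ht => hy t (hTc.trans ht)) (fun t ht =>
        nonneg_of_opow (H.hr₁p t (hT.le.trans (hTc.trans ht))) (hs t ht)))
    · exact Or.inr (aux_anti (fun t ht => hy t (hTc.trans ht)) (fun t ht =>
        nonpos_of_opow (H.hr₁p t (hT.le.trans (hTc.trans ht))) (hs t ht)))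
  by_contra hnot
  have hlow : ∃ l, 0 < l ∧ ∀ t, c ≤ t → l ≤ y t := by
    rcases my with my | my
    · exact ⟨y c, hpos c hTc, fun t ht => my Set.self_mem_Ici ht ht⟩
    · by_contra hno
      push Not at hno
      apply hnot
      rw [Metric.tendsto_atTop]
      intro ε hε
      obtain ⟨t, ht, hlt⟩ := hno ε hε
      refine ⟨t, fun s hs => ?_⟩
      have h1 := my ht (le_trans ht hs) hs
      rw [Real.dist_eq, sub_zero, abs_of_pos (hpos s (hTc.trans (ht.trans hs)))]
      linarith
  obtain ⟨l, hl, hly⟩ := hlow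
  have htc : t₀ < c := hT.trans_le hTc
  -- chain
  set B : ℝ := (piInf r₁ r₂ α β t₀) ^ γ + 1 with hB
  have hB0 : 0 < B := by
    have : 0 ≤ (piInf r₁ r₂ α β t₀) ^ γ := Real.rpow_nonneg (pn t₀ le_rfl) γ
    linarith
  have hlB : 0 < l ^ γ / B := div_pos (Real.rpow_pos_of_pos hl γ) hB0
  obtain ⟨d, hd, hdL⟩ := aux_cmp (F := L2 r₁ r₂ α β y) (G := I) (a := c) (c := l ^ γ / B) hlB
    (fun t ht => hL2 t (hTc.trans ht)) (fun t ht => (Id t (htc.trans_le ht)).differentiableAt)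
    (fun t ht => by
      rw [hd3 t (hTc.trans ht), (Id t (htc.trans_le ht)).deriv]
      have ht0 := htc.le.trans ht
      have h1 : l ^ γ ≤ (y (σ t)) ^ γ :=
        Real.rpow_le_rpow hl.le (hly _ (ht.trans (H.hσadv t ht0))) hγ.le
      have h2 : (piInf r₁ r₂ α β (σ t)) ^ γ ≤ B := by
        have : (piInf r₁ r₂ α β (σ t)) ^ γ ≤ (piInf r₁ r₂ α β t₀) ^ γ :=
          Real.rpow_le_rpow (pn _ (hσm t ht0)) (pb _ (hσm t ht0)) hγ.le
        linarith
      have hq := H.hq0 t ht0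
      have h3 : l ^ γ / B * ((piInf r₁ r₂ α β (σ t)) ^ γ * q t) ≤ l ^ γ / B * (B * q t) := by
        gcongr
      have h4 : l ^ γ / B * (B * q t) = l ^ γ * q t := by field_simp
      have h5 := mul_le_mul_of_nonneg_right h1 hq
      linarith) Iinf
  have htd : t₀ < d := htc.trans_le hd
  have hc2 : 0 < l ^ γ / B / 2 := by positivity
  obtain ⟨e, he, heL⟩ := aux_cmp (F := L1 r₁ α y) (G := J) (a := d)
    (c := (l ^ γ / B / 2) ^ (1/β)) (Real.rpow_pos_of_pos hc2 _)
    (fun t ht => hL1 t (hTc.trans (hd.trans ht)))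
    (fun t ht => (Jd t (htd.trans_le ht)).differentiableAt)
    (fun t ht => by
      rw [(Jd t (htd.trans_le ht)).deriv]
      exact opow_bound (H.hr₂p t (htd.le.trans ht)) hβ (I0 t (htd.le.trans ht)) hc2 (hdL t ht))
    Jinf
  have hte : t₀ < e := htd.trans_le he
  have hc3 : 0 < (l ^ γ / B / 2) ^ (1/β) / 2 := half_pos (Real.rpow_pos_of_pos hc2 _)
  obtain ⟨f, hf, hfL⟩ := aux_cmp (F := y) (G := K) (a := e)
    (c := ((l ^ γ / B / 2) ^ (1/β) / 2) ^ (1/α)) (Real.rpow_pos_of_pos hc3 _)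
    (fun t ht => hy t (hTc.trans (hd.trans (he.trans ht))))
    (fun t ht => (Kd t (hte.trans_le ht)).differentiableAt)
    (fun t ht => by
      rw [(Kd t (hte.trans_le ht)).deriv]
      exact opow_bound (H.hr₁p t (hte.le.trans ht)) hα (J0 t (hte.le.trans ht)) hc3 (heL t ht))
    Kinf
  have h1 := hfL f le_rfl
  have h2 := hpos f (hTc.trans (hd.trans (he.trans hf)))
  have h3 := K0 f (hte.le.trans hf)
  have h4 := mul_nonneg (half_pos (Real.rpow_pos_of_pos hc3 (1/α))).le h3
  linarith

lemma L1_neg' (r₁ : ℝ → ℝ) (α : ℝ) (y : ℝ → ℝ) : L1 r₁ α (-y) = - L1 r₁ α y := by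
  funext t
  simp [L1, deriv.neg, opow_neg']

lemma L2_neg' (r₁ r₂ : ℝ → ℝ) (α β : ℝ) (y : ℝ → ℝ) :
    L2 r₁ r₂ α β (-y) = - L2 r₁ r₂ α β y := by
  funext t
  simp [L2, L1_neg', deriv.neg, opow_neg']

lemma L3_neg' (r₁ r₂ : ℝ → ℝ) (α β : ℝ) (y : ℝ → ℝ) :
    L3 r₁ r₂ α β (-y) = - L3 r₁ r₂ α β y := by
  funext t
  simp [L3, L2_neg', deriv.neg]

theorem propertyA_of_div' (t₀ α β γ : ℝ) (r₁ r₂ q σ : ℝ → ℝ)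
    (H : Hyp t₀ α β γ r₁ r₂ q σ)
    (hdiv : Filter.Tendsto (fun t => ∫ v in t₀..t, r₁ v ^ (-(1/α)) *
      (∫ u in t₀..v, r₂ u ^ (-(1/β)) *
        (∫ s in t₀..u, (piInf r₁ r₂ α β (σ s)) ^ γ * q s) ^ (1/β)) ^ (1/α))
      Filter.atTop Filter.atTop) :
    PropertyA t₀ α β γ r₁ r₂ q σ := by
  rintro y ⟨T₀, hT₀, yc, yd, -, d1, -, d2, heq, -⟩
  by_cases hosc : Oscillatory y
  · exact Or.inl hosc
  right
  unfold Oscillatory at hosc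
  push Not at hosc
  obtain ⟨T₁, hT₁⟩ := hosc
  obtain ⟨T, hTa, hTb⟩ : ∃ T, T₀ < T ∧ T₁ ≤ T :=
    ⟨max (T₀ + 1) T₁, (lt_add_one T₀).trans_le (le_max_left _ _), le_max_right _ _⟩
  have hT : t₀ < T := hT₀.trans_lt hTa
  have hdiff : ∀ {g : ℝ → ℝ}, DifferentiableOn ℝ g (Set.Ici T₀) →
      ∀ t, T ≤ t → DifferentiableAt ℝ g t := fun hg t ht =>
    hg.differentiableAt (Ici_mem_nhds (hTa.trans_le ht))
  have hne : ∀ t, T ≤ t → y t ≠ 0 := fun t ht => hT₁ t (hTb.trans ht)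
  have hsign : (∀ t, T ≤ t → 0 < y t) ∨ (∀ t, T ≤ t → y t < 0) := by
    by_contra hcon
    push Not at hcon
    obtain ⟨⟨a, ha, ha0⟩, ⟨b, hb, hb0⟩⟩ := hcon
    have hpre : IsPreconnected (Set.Ici T) := isPreconnected_Ici
    have hcT : ContinuousOn y (Set.Ici T) := yc.mono (Set.Ici_subset_Ici.2 hTa.le)
    obtain ⟨x, hx, hx0⟩ := hpre.intermediate_value (Set.mem_Ici.2 ha) (Set.mem_Ici.2 hb) hcT
      (⟨ha0, hb0⟩ : (0:ℝ) ∈ Set.Icc (y a) (y b))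
    exact hne x hx hx0
  rcases hsign with hp | hn
  · exact core_pos t₀ α β γ r₁ r₂ q σ H hdiv y T hT (hdiff yd) (hdiff d1) (hdiff d2)
      (fun t ht => heq t (hTa.le.trans ht)) hp
  · have h := core_pos t₀ α β γ r₁ r₂ q σ H hdiv (-y) T hT (hdiff yd.neg)
      (by rw [L1_neg']; exact hdiff d1.neg) (by rw [L2_neg']; exact hdiff d2.neg)
      (fun t ht => by
        have := heq t (hTa.le.trans ht)
        rw [L3_neg']
        simp only [Pi.neg_apply, opow_neg']
        linarith) (fun t ht => by simpa using hn t ht)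
    simpa using h.neg
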